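/- Let γ ∈ [0,1) and let f be an injective holomorphic map from the unit disk B(0,1) ⊆ ℂ into ℂ. Suppose for each r ∈ (0,1) that u_r is a γ-torsion function of the simply connected domain f(B(0,r)), and that the map (r,z) ↦ u_r(f(z)) is continuously differentiable jointly on {(r,z) : 0 < r < 1, |z| < r}. Then the function r ↦ r^{−4/(1−γ)} · ∫_{f(B(0,r))} |∇u_r|² dA is monotone increasing on (0,1); moreover, if f is not an affine linear map z ↦ az + b, it is strictly increasing. (This is the forward Schwarz-type lemma for the γ-torsional rigidity, Lemma 5.1, since T_γ(B(0,r)) = r^{4/(1−γ)} T_γ(B(0,1)).) -/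

import Mathlib

open MeasureTheory Real

/-- The Euclidean Laplacian on `ℝ² ≅ ℂ`. -/
noncomputable def lapC (u : ℂ → ℝ) (x : ℂ) : ℝ :=
  fderiv ℝ (fderiv ℝ u) x 1 1 + fderiv ℝ (fderiv ℝ u) x Complex.I Complex.I

/-- `u` is a `γ`-torsion function of `O ⊆ ℂ`: continuous on the closure, `C¹` up to the
boundary, `C²` inside, with `Δu = -u^γ`, `u > 0` in `O` and `u = 0` on `∂O`. -/
def IsTorsionFnC (γ : ℝ) (O : Set ℂ) (u : ℂ → ℝ) : Prop :=
  ContinuousOn u (closure O) ∧ ContDiffOn ℝ 1 u (closure O) ∧ ContDiffOn ℝ 2 u O ∧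
  (∀ x ∈ O, lapC u x = -(u x ^ γ)) ∧ (∀ x ∈ O, 0 < u x) ∧ (∀ x ∈ frontier O, u x = 0)

/-!
Write `S r` for the rigidity of `f '' ball 0 r` divided by `r ^ (4 / (1 - γ))`. Up to a scalar, the
pullback `y_c` of `u ‖c‖` by `z ↦ f (c * z)` is a positive solution on the unit disc of
`Δ y = -‖f' (c * z)‖ ^ 2 * y ^ γ` with zero boundary values, and by conformal invariance its
Dirichlet integral is `S ‖c‖`. By Picone's inequality `y_c` maximizes the energy
`(2 / (1 + γ)) ∫ ‖f' (c * z)‖ ^ 2 * φ ^ (1 + γ) - ∫ ‖∇ φ‖ ^ 2`. Testing the maximality of `y_ζ`, for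
`‖ζ‖ = b`, with `φ = y_a` gives
`∫ ‖f' (ζ * z)‖ ^ 2 * y_a ^ (1 + γ) ≤ (1 + γ) / 2 * S a + (1 - γ) / 2 * S b`.
The left-hand side is the squared norm of an `L²`-valued holomorphic function of `ζ`, so by the
maximum principle the bound persists at `ζ = a < b`, where the left-hand side is `S a`. This is
`S a ≤ S b`. If equality holds, the strong maximum principle makes `ζ ↦ f' (ζ * ·)` constant.
-/

section

open Filter Set Topology Laplacian InnerProductSpace Gradient

section Truncation

variable {ε t : ℝ}

/-- A `C¹` approximation of the identity of `[0, ∞)` with derivative in `[0, 1]`, vanishing on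
`[0, ε]`. Composing a function that tends to `0` at the boundary with it gives a compactly
supported function, without increasing the gradient. -/
noncomputable def truncation (ε t : ℝ) : ℝ :=
  ∫ s in 0..t, smoothTransition (s / ε - 1)

lemma hasDerivAt_truncation (ε t : ℝ) :
    HasDerivAt (truncation ε) (smoothTransition (t / ε - 1)) t :=
  (Continuous.integral_hasStrictDerivAt
    (smoothTransition.continuous.comp (by fun_prop)) 0 t).hasDerivAt

lemma contDiff_truncation (ε : ℝ) : ContDiff ℝ 1 (truncation ε) := by
  refine contDiff_one_iff_deriv.2 ⟨fun t ↦ (hasDerivAt_truncation ε t).differentiableAt, ?_⟩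
  rw [funext fun t ↦ (hasDerivAt_truncation ε t).deriv]
  exact smoothTransition.continuous.comp (by fun_prop)

lemma truncation_of_le (hε : 0 < ε) (h : t ≤ ε) : truncation ε t = 0 := by
  refine intervalIntegral.integral_zero_ae (Eventually.of_forall fun s hs ↦ ?_)
  have hsε : s ≤ ε := hs.2.trans (max_le hε.le h)
  exact smoothTransition.zero_of_nonpos (by linarith [(div_le_one hε).2 hsε])

lemma truncation_nonneg (ht : 0 ≤ t) : 0 ≤ truncation ε t :=
  intervalIntegral.integral_nonneg ht fun _ _ ↦ smoothTransition.nonneg _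

lemma truncation_le (ht : 0 ≤ t) : truncation ε t ≤ t := by
  calc truncation ε t ≤ ∫ _ in 0..t, (1 : ℝ) :=
        intervalIntegral.integral_mono_on ht
          ((smoothTransition.continuous.comp (by fun_prop)).intervalIntegrable _ _) (by simp)
          fun _ _ ↦ smoothTransition.le_one _
    _ = t := by simp

lemma tendsto_smoothTransition_div_sub_one (ht : 0 < t) :
    Tendsto (fun ε ↦ smoothTransition (t / ε - 1)) (𝓝[>] 0) (𝓝 1) := by
  refine tendsto_const_nhds.congr' ?_
  filter_upwards [Ioo_mem_nhdsGT (half_pos ht)] with ε hε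
  refine (smoothTransition.one_of_one_le ?_).symm
  linarith [(le_div_iff₀ hε.1).2 (by linarith [hε.2] : 2 * ε ≤ t)]

lemma tendsto_truncation (ht : 0 < t) :
    Tendsto (fun ε ↦ truncation ε t) (𝓝[>] 0) (𝓝 t) := by
  have h : Tendsto (fun ε ↦ truncation ε t) (𝓝[>] 0) (𝓝 (∫ _ in 0..t, (1 : ℝ))) := by
    refine intervalIntegral.tendsto_integral_filter_of_dominated_convergence (fun _ ↦ 1)
      (Eventually.of_forall fun ε ↦
        (smoothTransition.continuous.comp (by fun_prop)).aestronglyMeasurable)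
      (Eventually.of_forall fun ε ↦ Eventually.of_forall fun s _ ↦ ?_) (by simp)
      (Eventually.of_forall fun s hs ↦ ?_)
    · rw [norm_of_nonneg (smoothTransition.nonneg _)]
      exact smoothTransition.le_one _
    · rw [uIoc_of_le ht.le] at hs
      exact tendsto_smoothTransition_div_sub_one hs.1
  simpa using h

end Truncation

section Integration

variable {α F ι : Type*} [MeasurableSpace α] [NormedAddCommGroup F] {μ : Measure α}
  {l : Filter ι} [l.NeBot] [l.IsCountablyGenerated]

lemma integrable_of_tendsto_of_integral_norm_le {G : ι → α → F} {f : α → F} {C : ℝ}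
    (hGm : ∀ i, AEStronglyMeasurable (G i) μ) (hGi : ∀ᶠ i in l, Integrable (G i) μ)
    (hC : ∀ᶠ i in l, ∫ x, ‖G i x‖ ∂μ ≤ C)
    (hf : ∀ᵐ x ∂μ, Tendsto (fun i ↦ G i x) l (𝓝 (f x))) : Integrable f μ := by
  refine ⟨aestronglyMeasurable_of_tendsto_ae l hGm hf, ?_⟩
  calc ∫⁻ x, ‖f x‖ₑ ∂μ = ∫⁻ x, liminf (fun i ↦ ‖G i x‖ₑ) l ∂μ :=
        lintegral_congr_ae (hf.mono fun x hx ↦ hx.enorm.liminf_eq.symm)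
    _ ≤ liminf (fun i ↦ ∫⁻ x, ‖G i x‖ₑ ∂μ) l := lintegral_liminf_le' fun i ↦ (hGm i).enorm
    _ ≤ ENNReal.ofReal C := by
        refine liminf_le_of_frequently_le' (Eventually.frequently ?_)
        filter_upwards [hGi, hC] with i hi hCi
        rw [← ofReal_integral_norm_eq_lintegral_enorm hi]
        exact ENNReal.ofReal_le_ofReal hCi
    _ < ⊤ := ENNReal.ofReal_lt_top

end Integration

section CompactSupport

variable {E F : Type*} [NormedAddCommGroup E] [NormedAddCommGroup F] {U K : Set E}

lemma integrableOn_of_continuousOn_of_eq_zero [MeasurableSpace E] [BorelSpace E]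
    {μ : Measure E} [IsFiniteMeasureOnCompacts μ] {V : E → F} (hU : IsOpen U)
    (hV : ContinuousOn V U) (hK : IsCompact K) (hKU : K ⊆ U) (hVK : ∀ z ∈ U \ K, V z = 0) :
    IntegrableOn V U μ := by
  have h : IntegrableOn V (U \ K) μ := by
    refine integrableOn_zero.congr_fun (fun z hz ↦ (hVK z hz).symm) ?_
    exact hU.measurableSet.diff hK.measurableSet
  simpa [union_sdiff_cancel hKU] using ((hV.mono hKU).integrableOn_compact hK).union h

variable [NormedSpace ℝ E]

lemma contDiff_indicator_of_eq_zero [NormedSpace ℝ F] {n : WithTop ℕ∞} {V : E → F}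
    (hU : IsOpen U) (hV : ContDiffOn ℝ n V U) (hK : IsClosed K) (hKU : K ⊆ U)
    (hVK : ∀ z ∈ U \ K, V z = 0) : ContDiff ℝ n (U.indicator V) := by
  refine contDiff_iff_contDiffAt.2 fun z ↦ ?_
  by_cases hz : z ∈ U
  · refine (hV.contDiffAt (hU.mem_nhds hz)).congr_of_eventuallyEq ?_
    filter_upwards [hU.mem_nhds hz] with w hw using indicator_of_mem hw V
  · refine contDiffAt_const.congr_of_eventuallyEq (f := fun _ ↦ (0 : F)) ?_
    filter_upwards [hK.isOpen_compl.mem_nhds fun h ↦ hz (hKU h)] with w hw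
    by_cases hwU : w ∈ U
    · rw [indicator_of_mem hwU, hVK w ⟨hwU, hw⟩]
    · exact indicator_of_notMem hwU V

lemma integral_fderiv_apply_eq_zero [FiniteDimensional ℝ E] [MeasurableSpace E] [BorelSpace E]
    {μ : Measure E} [μ.IsAddHaarMeasure] {V : E → ℝ} (hV : ContDiff ℝ 1 V)
    (hc : HasCompactSupport V) (v : E) : ∫ x, fderiv ℝ V x v ∂μ = 0 := by
  have hi : Integrable (fun x ↦ fderiv ℝ V x v) μ :=
    ((hV.continuous_fderiv one_ne_zero).clm_apply continuous_const).integrable_of_hasCompactSupport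
      (hc.fderiv_apply (𝕜 := ℝ) v)
  simpa using integral_mul_fderiv_eq_neg_fderiv_mul_of_integrable (μ := μ)
    (f := fun _ ↦ (1 : ℝ)) (g := V) (v := v) (by simp) (by simpa using hi)
    (by simpa using hV.continuous.integrable_of_hasCompactSupport hc)
    (fun x _ ↦ by fun_prop) (fun x _ ↦ hV.differentiable one_ne_zero x)

lemma fderiv_eq_zero_of_eqOn_zero [NormedSpace ℝ F] {V : E → F} {z : E} (hU : IsOpen U)
    (hV : ∀ z ∈ U, V z = 0) (hz : z ∈ U) : fderiv ℝ V z = 0 := by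
  have : V =ᶠ[𝓝 z] fun _ ↦ 0 := by filter_upwards [hU.mem_nhds hz] with w hw using hV w hw
  rw [this.fderiv_eq, fderiv_fun_const, Pi.zero_apply]

lemma integrableOn_fderiv_apply [MeasurableSpace E] [BorelSpace E] {μ : Measure E}
    [IsFiniteMeasureOnCompacts μ] {V : E → ℝ} (hU : IsOpen U) (hV : ContDiffOn ℝ 1 V U)
    (hK : IsCompact K) (hKU : K ⊆ U) (hVK : ∀ z ∈ U \ K, V z = 0) (v : E) :
    IntegrableOn (fun z ↦ fderiv ℝ V z v) U μ := by
  refine integrableOn_of_continuousOn_of_eq_zero hU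
    ((hV.continuousOn_fderiv_of_isOpen hU le_rfl).clm_apply continuousOn_const) hK hKU
    fun z hz ↦ ?_
  rw [fderiv_eq_zero_of_eqOn_zero (hU.sdiff hK.isClosed) hVK hz, zero_apply]

lemma setIntegral_fderiv_apply_eq_zero [FiniteDimensional ℝ E] [MeasurableSpace E]
    [BorelSpace E] {μ : Measure E} [μ.IsAddHaarMeasure] {V : E → ℝ} (hU : IsOpen U)
    (hV : ContDiffOn ℝ 1 V U) (hK : IsCompact K) (hKU : K ⊆ U) (hVK : ∀ z ∈ U \ K, V z = 0)
    (v : E) : ∫ z in U, fderiv ℝ V z v ∂μ = 0 := by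
  have hsupp : ∀ z ∉ K, U.indicator V z = 0 := fun z hz ↦ by
    by_cases hzU : z ∈ U
    · rw [indicator_of_mem hzU, hVK z ⟨hzU, hz⟩]
    · exact indicator_of_notMem hzU V
  have hcongr : ∀ z ∈ U, fderiv ℝ V z v = fderiv ℝ (U.indicator V) z v := fun z hz ↦ by
    have : U.indicator V =ᶠ[𝓝 z] V := by
      filter_upwards [hU.mem_nhds hz] with w hw using indicator_of_mem hw V
    rw [this.fderiv_eq]
  have hzero : ∀ z ∉ U, fderiv ℝ (U.indicator V) z v = 0 := fun z hz ↦ by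
    simp [fderiv_eq_zero_of_eqOn_zero hK.isClosed.isOpen_compl hsupp fun h ↦ hz (hKU h)]
  rw [setIntegral_congr_fun hU.measurableSet hcongr,
    setIntegral_eq_integral_of_forall_compl_eq_zero hzero]
  exact integral_fderiv_apply_eq_zero
    (contDiff_indicator_of_eq_zero hU hV hK.isClosed hKU hVK) (.intro hK hsupp) v

end CompactSupport

section Gradient

variable {E : Type*} [NormedAddCommGroup E] [InnerProductSpace ℝ E] [CompleteSpace E]
  {U K : Set E} {q y : E → ℝ} {z : E}

lemma continuousOn_gradient (hU : IsOpen U) (hy : ContDiffOn ℝ 1 y U) : ContinuousOn (∇ y) U :=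
  (toDual ℝ E).symm.continuous.comp_continuousOn (hy.continuousOn_fderiv_of_isOpen hU le_rfl)

lemma gradient_eq_zero_of_eqOn_zero (hU : IsOpen U) (hq : ∀ z ∈ U, q z = 0) (hz : z ∈ U) :
    ∇ q z = 0 := by
  rw [gradient, fderiv_eq_zero_of_eqOn_zero hU hq hz, map_zero]

lemma gradient_const_mul (hq : DifferentiableAt ℝ q z) (κ : ℝ) :
    ∇ (fun x ↦ κ * q x) z = κ • ∇ q z := by
  rw [gradient, gradient, fderiv_const_mul hq, map_smul]

lemma integrableOn_inner_gradient_gradient [MeasurableSpace E] [BorelSpace E] {μ : Measure E}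
    [IsFiniteMeasureOnCompacts μ] (hU : IsOpen U) (hy : ContDiffOn ℝ 1 y U)
    (hq : ContDiffOn ℝ 1 q U) (hK : IsCompact K) (hKU : K ⊆ U) (hqK : ∀ z ∈ U \ K, q z = 0) :
    IntegrableOn (fun z ↦ ⟪∇ q z, ∇ y z⟫_ℝ) U μ := by
  refine integrableOn_of_continuousOn_of_eq_zero hU
    ((continuousOn_gradient hU hq).inner (continuousOn_gradient hU hy)) hK hKU fun z hz ↦ ?_
  rw [gradient_eq_zero_of_eqOn_zero (hU.sdiff hK.isClosed) hqK hz, inner_zero_left]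

lemma gradient_sq_div (hq : DifferentiableAt ℝ q z) (hy : DifferentiableAt ℝ y z)
    (hyz : y z ≠ 0) :
    ∇ (fun x ↦ q x ^ 2 / y x) z = (2 * (q z / y z)) • ∇ q z - (q z / y z) ^ 2 • ∇ y z := by
  apply HasGradientAt.gradient
  rw [hasGradientAt_iff_hasFDerivAt]
  have hinv := (hasDerivAt_inv hyz).comp_hasFDerivAt z hy.hasFDerivAt
  refine ((hq.hasFDerivAt.pow 2).fun_mul hinv).congr_fderiv ?_
  ext v
  simp only [neg_smul, smul_neg, Function.comp_apply, Nat.add_one_sub_one, pow_one, nsmul_eq_mul,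
    Nat.cast_ofNat, add_apply, neg_apply, smul_apply, smul_eq_mul, map_sub, map_smul,
    toDual_gradient, sub_apply]
  field_simp
  ring

lemma inner_gradient_sq_div_le (hq : DifferentiableAt ℝ q z) (hy : DifferentiableAt ℝ y z)
    (hyz : y z ≠ 0) :
    ⟪∇ (fun x ↦ q x ^ 2 / y x) z, ∇ y z⟫_ℝ ≤ ‖∇ q z‖ ^ 2 := by
  have h := sq_nonneg ‖∇ q z - (q z / y z) • ∇ y z‖
  rw [norm_sub_sq_real, real_inner_smul_right, norm_smul, mul_pow, norm_eq_abs, sq_abs] at h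
  rw [gradient_sq_div hq hy hyz, inner_sub_left, real_inner_smul_left, real_inner_smul_left,
    real_inner_self_eq_norm_sq]
  linarith

end Gradient

section Green

variable {E : Type*} [NormedAddCommGroup E] [InnerProductSpace ℝ E] [FiniteDimensional ℝ E]
  {U K : Set E} {q y : E → ℝ} {z : E}

lemma continuousOn_laplacian (hU : IsOpen U) (hy : ContDiffOn ℝ 2 y U) :
    ContinuousOn (Δ y) U := by
  simp only [laplacian_eq_iteratedFDeriv_stdOrthonormalBasis, iteratedFDeriv_two_apply]
  refine continuousOn_finsetSum _ fun i _ ↦ ?_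
  exact (((hy.fderiv_of_isOpen hU (m := 1) (by norm_num)).continuousOn_fderiv_of_isOpen hU
    le_rfl).clm_apply continuousOn_const).clm_apply continuousOn_const

lemma inner_gradient_gradient_add_mul_laplacian (hq : DifferentiableAt ℝ q z)
    (hy : DifferentiableAt ℝ (fderiv ℝ y) z) :
    ⟪∇ q z, ∇ y z⟫_ℝ + q z * Δ y z =
      ∑ i, fderiv ℝ (fun x ↦ q x * fderiv ℝ y x (stdOrthonormalBasis ℝ E i)) z
        (stdOrthonormalBasis ℝ E i) := by
  have hderiv (v : E) : fderiv ℝ (fun x ↦ q x * fderiv ℝ y x v) z v =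
      ⟪∇ q z, v⟫_ℝ * ⟪v, ∇ y z⟫_ℝ + q z * fderiv ℝ (fderiv ℝ y) z v v := by
    rw [(hq.hasFDerivAt.fun_mul (hy.hasFDerivAt.clm_apply (hasFDerivAt_const v z))).fderiv,
      real_inner_comm (∇ y z)]
    simp only [ContinuousLinearMap.comp_zero, zero_add, add_apply, smul_apply,
      ContinuousLinearMap.flip_apply, smul_eq_mul, inner_gradient_left]
    ring
  simp only [hderiv, Finset.sum_add_distrib, ← Finset.mul_sum, OrthonormalBasis.sum_inner_mul_inner,
    laplacian_eq_iteratedFDeriv_stdOrthonormalBasis, iteratedFDeriv_two_apply]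
  simp

variable [MeasurableSpace E] [BorelSpace E] {μ : Measure E}

lemma integrableOn_mul_laplacian [IsFiniteMeasureOnCompacts μ] (hU : IsOpen U)
    (hy : ContDiffOn ℝ 2 y U) (hq : ContinuousOn q U) (hK : IsCompact K) (hKU : K ⊆ U)
    (hqK : ∀ z ∈ U \ K, q z = 0) :
    IntegrableOn (fun z ↦ q z * Δ y z) U μ :=
  integrableOn_of_continuousOn_of_eq_zero hU (hq.mul (continuousOn_laplacian hU hy)) hK hKU
    fun z hz ↦ by rw [hqK z hz, zero_mul]

lemma setIntegral_inner_gradient_gradient [μ.IsAddHaarMeasure] (hU : IsOpen U)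
    (hy : ContDiffOn ℝ 2 y U) (hq : ContDiffOn ℝ 1 q U) (hK : IsCompact K) (hKU : K ⊆ U)
    (hqK : ∀ z ∈ U \ K, q z = 0) :
    ∫ z in U, ⟪∇ q z, ∇ y z⟫_ℝ ∂μ = -∫ z in U, q z * Δ y z ∂μ := by
  have hDy : ContDiffOn ℝ 1 (fderiv ℝ y) U := hy.fderiv_of_isOpen hU (by norm_num)
  have hV (v : E) : ContDiffOn ℝ 1 (fun z ↦ q z * fderiv ℝ y z v) U :=
    hq.mul (hDy.clm_apply contDiffOn_const)
  have hVK (v : E) : ∀ z ∈ U \ K, q z * fderiv ℝ y z v = 0 := fun z hz ↦ by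
    rw [hqK z hz, zero_mul]
  rw [eq_neg_iff_add_eq_zero, ← integral_add
    (integrableOn_inner_gradient_gradient hU (hy.of_le one_le_two) hq hK hKU hqK)
    (integrableOn_mul_laplacian hU hy hq.continuousOn hK hKU hqK),
    setIntegral_congr_fun hU.measurableSet fun z hz ↦ inner_gradient_gradient_add_mul_laplacian
      ((hq.differentiableOn one_ne_zero).differentiableAt (hU.mem_nhds hz))
      ((hDy.differentiableOn one_ne_zero).differentiableAt (hU.mem_nhds hz)),
    integral_finsetSum _ fun i _ ↦ integrableOn_fderiv_apply hU (hV _) hK hKU (hVK _) _]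
  exact Finset.sum_eq_zero fun i _ ↦
    setIntegral_fderiv_apply_eq_zero hU (hV _) hK hKU (hVK _) _

/-- Picone's inequality, integrated. -/
lemma setIntegral_sq_div_mul_neg_laplacian_le [μ.IsAddHaarMeasure] {ψ : E → ℝ} (hU : IsOpen U)
    (hy : ContDiffOn ℝ 2 y U) (hyU : ∀ z ∈ U, y z ≠ 0) (hψ : ContDiffOn ℝ 1 ψ U)
    (hK : IsCompact K) (hKU : K ⊆ U) (hψK : ∀ z ∈ U \ K, ψ z = 0) :
    ∫ z in U, ψ z ^ 2 / y z * -Δ y z ∂μ ≤ ∫ z in U, ‖∇ ψ z‖ ^ 2 ∂μ := by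
  have hy1 : ContDiffOn ℝ 1 y U := hy.of_le one_le_two
  have hq : ContDiffOn ℝ 1 (fun z ↦ ψ z ^ 2 / y z) U := (hψ.pow 2).div hy1 hyU
  have hqK : ∀ z ∈ U \ K, ψ z ^ 2 / y z = 0 := fun z hz ↦ by simp [hψK z hz]
  simp only [mul_neg, integral_neg]
  rw [← setIntegral_inner_gradient_gradient hU hy hq hK hKU hqK]
  refine setIntegral_mono_on (integrableOn_inner_gradient_gradient hU hy1 hq hK hKU hqK) ?_
    hU.measurableSet fun z hz ↦ ?_
  · simpa only [real_inner_self_eq_norm_sq] using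
      integrableOn_inner_gradient_gradient hU hψ hψ hK hKU hψK
  · exact inner_gradient_sq_div_le
      ((hψ.differentiableOn one_ne_zero).differentiableAt (hU.mem_nhds hz))
      ((hy1.differentiableOn one_ne_zero).differentiableAt (hU.mem_nhds hz)) (hyU z hz)

end Green

lemma truncation_eq_zero {E : Type*} {U : Set E} {y : E → ℝ} {ε : ℝ} (hε : 0 < ε) :
    ∀ z ∈ U \ {z ∈ U | ε ≤ y z}, truncation ε (y z) = 0 := fun _ hz ↦
  truncation_of_le hε (le_of_not_ge fun hle ↦ hz.2 ⟨hz.1, hle⟩)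

lemma rpow_one_add_le {γ x t : ℝ} (hx : 0 ≤ x) (ht : 0 < t) (hγ : -1 ≤ γ) (hγ1 : γ ≤ 1) :
    x ^ (1 + γ) ≤ (1 + γ) / 2 * (x ^ 2 * t ^ (γ - 1)) + (1 - γ) / 2 * t ^ (1 + γ) := by
  have hAMGM := geom_mean_le_arith_mean2_weighted (p₁ := x ^ 2 * t ^ (γ - 1)) (p₂ := t ^ (1 + γ))
    (by linarith : 0 ≤ (1 + γ) / 2) (by linarith : 0 ≤ (1 - γ) / 2) (by positivity)
    (by positivity) (by ring)
  refine le_of_eq_of_le ?_ hAMGM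
  have hexp : (γ - 1) * ((1 + γ) / 2) + (1 + γ) * ((1 - γ) / 2) = 0 := by ring
  rw [mul_rpow (by positivity) (by positivity), ← rpow_natCast, ← rpow_mul hx, ← rpow_mul ht.le,
    ← rpow_mul ht.le, mul_assoc, ← rpow_add ht, hexp, rpow_zero, mul_one, Nat.cast_ofNat,
    mul_div_cancel₀ _ two_ne_zero]

section WeightedTorsion

variable {E : Type*} [NormedAddCommGroup E] [InnerProductSpace ℝ E] [FiniteDimensional ℝ E]
  {γ ε : ℝ} {U : Set E} {g g₁ y φ : E → ℝ}

/-- `y` is a positive solution of `Δ y = -g y ^ γ` on `U` with weight `g ≥ 0` and zero boundary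
values. The latter are encoded by compactness of the superlevel sets, which makes sense without
any regularity of `y` up to `∂U`. -/
structure IsWeightedTorsionFn (γ : ℝ) (U : Set E) (g y : E → ℝ) : Prop where
  isOpen : IsOpen U
  contDiffOn : ContDiffOn ℝ 2 y U
  pos : ∀ z ∈ U, 0 < y z
  isCompact_superlevel : ∀ ε > 0, IsCompact {z ∈ U | ε ≤ y z}
  laplacian_eq : ∀ z ∈ U, Δ y z = -(g z * y z ^ γ)
  weight_nonneg : ∀ z ∈ U, 0 ≤ g z

namespace IsWeightedTorsionFn

lemma contDiffOn_one (h : IsWeightedTorsionFn γ U g y) : ContDiffOn ℝ 1 y U :=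
  h.contDiffOn.of_le one_le_two

lemma differentiableAt (h : IsWeightedTorsionFn γ U g y) {z : E} (hz : z ∈ U) :
    DifferentiableAt ℝ y z :=
  (h.contDiffOn.differentiableOn two_ne_zero).differentiableAt (h.isOpen.mem_nhds hz)

lemma exists_le (h : IsWeightedTorsionFn γ U g y) : ∃ C, ∀ z ∈ U, y z ≤ C := by
  obtain ⟨C, hC⟩ := (h.isCompact_superlevel 1 one_pos).bddAbove_image
    (h.contDiffOn.continuousOn.mono (sep_subset _ _))
  refine ⟨max C 1, fun z hz ↦ ?_⟩
  rcases le_total 1 (y z) with h1 | h1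
  · exact (hC (mem_image_of_mem y ⟨hz, h1⟩)).trans (le_max_left _ _)
  · exact h1.trans (le_max_right _ _)

lemma const_mul (h : IsWeightedTorsionFn γ U g y) {κ : ℝ} (hκ : 0 < κ) :
    IsWeightedTorsionFn γ U (fun z ↦ κ ^ (1 - γ) * g z) (fun z ↦ κ * y z) where
  isOpen := h.isOpen
  contDiffOn := contDiffOn_const.mul h.contDiffOn
  pos z hz := mul_pos hκ (h.pos z hz)
  isCompact_superlevel ε hε := by
    simpa only [div_le_iff₀' hκ] using h.isCompact_superlevel (ε / κ) (div_pos hε hκ)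
  laplacian_eq z hz := by
    rw [show (fun x ↦ κ * y x) = κ • y from rfl,
      laplacian_smul κ (h.contDiffOn.contDiffAt (h.isOpen.mem_nhds hz)), h.laplacian_eq z hz,
      mul_rpow hκ.le (h.pos z hz).le, rpow_sub hκ, rpow_one, smul_eq_mul]
    field_simp
  weight_nonneg z hz := mul_nonneg (rpow_nonneg hκ.le _) (h.weight_nonneg z hz)

lemma contDiffOn_truncation (h : IsWeightedTorsionFn γ U g y) (ε : ℝ) :
    ContDiffOn ℝ 1 (fun z ↦ truncation ε (y z)) U :=
  (contDiff_truncation ε).comp_contDiffOn h.contDiffOn_one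

lemma gradient_truncation (h : IsWeightedTorsionFn γ U g y) (ε : ℝ) {z : E} (hz : z ∈ U) :
    ∇ (fun x ↦ truncation ε (y x)) z = smoothTransition (y z / ε - 1) • ∇ y z := by
  apply HasGradientAt.gradient
  rw [hasGradientAt_iff_hasFDerivAt, map_smul, toDual_gradient]
  exact (hasDerivAt_truncation ε (y z)).comp_hasFDerivAt z (h.differentiableAt hz).hasFDerivAt

lemma norm_gradient_truncation_le (h : IsWeightedTorsionFn γ U g y) (ε : ℝ) {z : E}
    (hz : z ∈ U) : ‖∇ (fun x ↦ truncation ε (y x)) z‖ ≤ ‖∇ y z‖ := by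
  rw [h.gradient_truncation ε hz, norm_smul, norm_of_nonneg (smoothTransition.nonneg _)]
  exact mul_le_of_le_one_left (norm_nonneg _) (smoothTransition.le_one _)

lemma weight_mul_rpow_mul_le (h : IsWeightedTorsionFn γ U g y) {z : E} (hz : z ∈ U) {t : ℝ}
    (ht : t ≤ y z) : g z * y z ^ γ * t ≤ g z * y z ^ (1 + γ) := by
  have hy := h.pos z hz
  rw [rpow_add hy, rpow_one, mul_comm (y z), ← mul_assoc]
  exact mul_le_mul_of_nonneg_left ht (mul_nonneg (h.weight_nonneg z hz) (rpow_nonneg hy.le γ))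

section Integrability

variable [MeasurableSpace E] [BorelSpace E] {μ : Measure E}

lemma integrableOn_weight_mul_rpow (h : IsWeightedTorsionFn γ U g y) (hg : IntegrableOn g₁ U μ)
    {p : ℝ} (hp : 0 ≤ p) : IntegrableOn (fun z ↦ g₁ z * y z ^ p) U μ := by
  obtain ⟨C, hC⟩ := h.exists_le
  have hcont : ContinuousOn (fun z ↦ y z ^ p) U :=
    h.contDiffOn.continuousOn.rpow_const fun z hz ↦ Or.inl (h.pos z hz).ne'
  refine Integrable.mul_bdd (c := C ^ p) hg
    (hcont.aestronglyMeasurable h.isOpen.measurableSet)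
    (ae_restrict_of_forall_mem h.isOpen.measurableSet fun z hz ↦ ?_)
  rw [norm_of_nonneg (rpow_nonneg (h.pos z hz).le p)]
  exact rpow_le_rpow (h.pos z hz).le (hC z hz) hp

variable [IsFiniteMeasureOnCompacts μ]

lemma integrableOn_smoothTransition_mul_norm_gradient_sq (h : IsWeightedTorsionFn γ U g y)
    (hε : 0 < ε) :
    IntegrableOn (fun z ↦ smoothTransition (y z / ε - 1) * ‖∇ y z‖ ^ 2) U μ := by
  refine (integrableOn_inner_gradient_gradient h.isOpen h.contDiffOn_one
    (h.contDiffOn_truncation ε) (h.isCompact_superlevel ε hε) (sep_subset _ _)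
    (truncation_eq_zero hε)).congr_fun (fun z hz ↦ ?_) h.isOpen.measurableSet
  simp only [h.gradient_truncation ε hz, real_inner_smul_left, real_inner_self_eq_norm_sq]

lemma integrableOn_weight_mul_truncation (h : IsWeightedTorsionFn γ U g y) (hε : 0 < ε) :
    IntegrableOn (fun z ↦ g z * y z ^ γ * truncation ε (y z)) U μ := by
  refine (integrableOn_mul_laplacian h.isOpen h.contDiffOn (h.contDiffOn_truncation ε).continuousOn
    (h.isCompact_superlevel ε hε) (sep_subset _ _) (truncation_eq_zero hε)).neg.congr_fun
    (fun z hz ↦ ?_) h.isOpen.measurableSet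
  simp only [Pi.neg_apply, h.laplacian_eq z hz]
  ring

lemma tendsto_setIntegral_weight_mul_truncation (h : IsWeightedTorsionFn γ U g y)
    (hγ : -1 ≤ γ) (hg : IntegrableOn g U μ) :
    Tendsto (fun ε ↦ ∫ z in U, g z * y z ^ γ * truncation ε (y z) ∂μ) (𝓝[>] 0)
      (𝓝 (∫ z in U, g z * y z ^ (1 + γ) ∂μ)) := by
  have hU := h.isOpen.measurableSet
  refine tendsto_integral_filter_of_dominated_convergence _
    (eventually_mem_nhdsWithin.mono fun ε hε ↦
      (h.integrableOn_weight_mul_truncation hε).aestronglyMeasurable)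
    (Eventually.of_forall fun ε ↦ ae_restrict_of_forall_mem hU fun z hz ↦ ?_)
    (h.integrableOn_weight_mul_rpow hg (p := 1 + γ) (by linarith))
    (ae_restrict_of_forall_mem hU fun z hz ↦ ?_)
  · have hy := (h.pos z hz).le
    rw [norm_of_nonneg (mul_nonneg (mul_nonneg (h.weight_nonneg z hz) (rpow_nonneg hy γ))
      (truncation_nonneg hy))]
    exact h.weight_mul_rpow_mul_le hz (truncation_le hy)
  · rw [rpow_add (h.pos z hz), rpow_one, mul_comm (y z), ← mul_assoc]
    exact (tendsto_truncation (h.pos z hz)).const_mul _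

end Integrability

section Energy

variable [MeasurableSpace E] [BorelSpace E] {μ : Measure E} [μ.IsAddHaarMeasure]

lemma setIntegral_smoothTransition_mul_norm_gradient_sq (h : IsWeightedTorsionFn γ U g y)
    (hε : 0 < ε) :
    ∫ z in U, smoothTransition (y z / ε - 1) * ‖∇ y z‖ ^ 2 ∂μ =
      ∫ z in U, g z * y z ^ γ * truncation ε (y z) ∂μ := by
  calc ∫ z in U, smoothTransition (y z / ε - 1) * ‖∇ y z‖ ^ 2 ∂μ
      = ∫ z in U, ⟪∇ (fun x ↦ truncation ε (y x)) z, ∇ y z⟫_ℝ ∂μ :=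
        setIntegral_congr_fun h.isOpen.measurableSet fun z hz ↦ by
          simp only [h.gradient_truncation ε hz, real_inner_smul_left, real_inner_self_eq_norm_sq]
    _ = -∫ z in U, truncation ε (y z) * Δ y z ∂μ :=
        setIntegral_inner_gradient_gradient h.isOpen h.contDiffOn (h.contDiffOn_truncation ε)
          (h.isCompact_superlevel ε hε) (sep_subset _ _) (truncation_eq_zero hε)
    _ = ∫ z in U, g z * y z ^ γ * truncation ε (y z) ∂μ := by
        rw [← integral_neg]
        refine setIntegral_congr_fun h.isOpen.measurableSet fun z hz ↦ ?_
        simp only [h.laplacian_eq z hz]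
        ring

lemma integrableOn_norm_gradient_sq (h : IsWeightedTorsionFn γ U g y) (hγ : -1 ≤ γ)
    (hg : IntegrableOn g U μ) : IntegrableOn (fun z ↦ ‖∇ y z‖ ^ 2) U μ := by
  have hU := h.isOpen.measurableSet
  have hpos : ∀ᶠ ε : ℝ in 𝓝[>] 0, 0 < ε := eventually_mem_nhdsWithin
  have hcont (ε : ℝ) :
      ContinuousOn (fun z ↦ smoothTransition (y z / ε - 1) * ‖∇ y z‖ ^ 2) U :=
    (smoothTransition.continuous.comp_continuousOn
      ((h.contDiffOn.continuousOn.div_const ε).sub continuousOn_const)).mul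
      ((continuousOn_gradient h.isOpen h.contDiffOn_one).norm.pow 2)
  refine integrable_of_tendsto_of_integral_norm_le (l := 𝓝[>] (0 : ℝ))
    (C := ∫ z in U, g z * y z ^ (1 + γ) ∂μ)
    (fun ε ↦ (hcont ε).aestronglyMeasurable hU)
    (hpos.mono fun ε hε ↦ h.integrableOn_smoothTransition_mul_norm_gradient_sq hε)
    (hpos.mono fun ε hε ↦ ?_) (ae_restrict_of_forall_mem hU fun z hz ↦ ?_)
  · simp only [norm_of_nonneg (mul_nonneg (smoothTransition.nonneg _) (sq_nonneg _))]
    rw [h.setIntegral_smoothTransition_mul_norm_gradient_sq hε]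
    exact setIntegral_mono_on (h.integrableOn_weight_mul_truncation hε)
      (h.integrableOn_weight_mul_rpow hg (by linarith)) hU
      fun z hz ↦ h.weight_mul_rpow_mul_le hz (truncation_le (h.pos z hz).le)
  · simpa only [one_mul] using
      (tendsto_smoothTransition_div_sub_one (h.pos z hz)).mul_const (‖∇ y z‖ ^ 2)

lemma setIntegral_norm_gradient_sq (h : IsWeightedTorsionFn γ U g y) (hγ : -1 ≤ γ)
    (hg : IntegrableOn g U μ) :
    ∫ z in U, ‖∇ y z‖ ^ 2 ∂μ = ∫ z in U, g z * y z ^ (1 + γ) ∂μ := by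
  have hU := h.isOpen.measurableSet
  have hpos : ∀ᶠ ε : ℝ in 𝓝[>] 0, 0 < ε := eventually_mem_nhdsWithin
  have hlim : Tendsto (fun ε ↦ ∫ z in U, smoothTransition (y z / ε - 1) * ‖∇ y z‖ ^ 2 ∂μ)
      (𝓝[>] 0) (𝓝 (∫ z in U, ‖∇ y z‖ ^ 2 ∂μ)) := by
    refine tendsto_integral_filter_of_dominated_convergence _
      (hpos.mono fun ε hε ↦
        (h.integrableOn_smoothTransition_mul_norm_gradient_sq hε).aestronglyMeasurable)
      (Eventually.of_forall fun ε ↦ Eventually.of_forall fun z ↦ ?_)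
      (h.integrableOn_norm_gradient_sq hγ hg) (ae_restrict_of_forall_mem hU fun z hz ↦ ?_)
    · rw [norm_of_nonneg (mul_nonneg (smoothTransition.nonneg _) (sq_nonneg _))]
      exact mul_le_of_le_one_left (sq_nonneg _) (smoothTransition.le_one _)
    · simpa only [one_mul] using
        (tendsto_smoothTransition_div_sub_one (h.pos z hz)).mul_const (‖∇ y z‖ ^ 2)
  refine tendsto_nhds_unique (hlim.congr' ?_) (h.tendsto_setIntegral_weight_mul_truncation hγ hg)
  exact hpos.mono fun ε hε ↦ h.setIntegral_smoothTransition_mul_norm_gradient_sq hε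

lemma setIntegral_weight_mul_rpow_le_of_eq_zero (h : IsWeightedTorsionFn γ U g y)
    (hγ : -1 ≤ γ) (hγ1 : γ ≤ 1) (hg : IntegrableOn g U μ) {K : Set E} {ψ : E → ℝ}
    (hψ : ContDiffOn ℝ 1 ψ U) (hψ0 : ∀ z ∈ U, 0 ≤ ψ z) (hK : IsCompact K) (hKU : K ⊆ U)
    (hψK : ∀ z ∈ U \ K, ψ z = 0) :
    ∫ z in U, g z * ψ z ^ (1 + γ) ∂μ ≤
      (1 + γ) / 2 * ∫ z in U, ‖∇ ψ z‖ ^ 2 ∂μ + (1 - γ) / 2 * ∫ z in U, ‖∇ y z‖ ^ 2 ∂μ := by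
  have hU := h.isOpen.measurableSet
  have hne : ∀ z ∈ U, y z ≠ 0 := fun z hz ↦ (h.pos z hz).ne'
  have hPicone : IntegrableOn (fun z ↦ ψ z ^ 2 / y z * -Δ y z) U μ := by
    simp only [mul_neg]
    exact Integrable.fun_neg (integrableOn_mul_laplacian
      (q := fun z ↦ ψ z ^ 2 / y z) h.isOpen h.contDiffOn
      ((hψ.continuousOn.pow 2).div h.contDiffOn.continuousOn hne) hK hKU
      fun z hz ↦ by simp [hψK z hz])
  have hy := h.integrableOn_weight_mul_rpow hg (p := 1 + γ) (by linarith)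
  calc ∫ z in U, g z * ψ z ^ (1 + γ) ∂μ
      ≤ ∫ z in U, ((1 + γ) / 2 * (ψ z ^ 2 / y z * -Δ y z) +
          (1 - γ) / 2 * (g z * y z ^ (1 + γ))) ∂μ := by
        refine integral_mono_of_nonneg (ae_restrict_of_forall_mem hU fun z hz ↦
          mul_nonneg (h.weight_nonneg z hz) (rpow_nonneg (hψ0 z hz) _))
          ((hPicone.const_mul _).add (hy.const_mul _))
          (ae_restrict_of_forall_mem hU fun z hz ↦ ?_)
        calc g z * ψ z ^ (1 + γ)
            ≤ g z * ((1 + γ) / 2 * (ψ z ^ 2 * y z ^ (γ - 1)) + (1 - γ) / 2 * y z ^ (1 + γ)) :=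
              mul_le_mul_of_nonneg_left
                (rpow_one_add_le (hψ0 z hz) (h.pos z hz) hγ hγ1) (h.weight_nonneg z hz)
          _ = _ := by simp only [h.laplacian_eq z hz, rpow_sub_one (hne z hz)]; ring
    _ = (1 + γ) / 2 * ∫ z in U, ψ z ^ 2 / y z * -Δ y z ∂μ +
          (1 - γ) / 2 * ∫ z in U, ‖∇ y z‖ ^ 2 ∂μ := by
        rw [integral_add (hPicone.const_mul _) (hy.const_mul _), integral_const_mul,
          integral_const_mul, h.setIntegral_norm_gradient_sq hγ hg]
    _ ≤ _ := add_le_add_left (mul_le_mul_of_nonneg_left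
        (setIntegral_sq_div_mul_neg_laplacian_le h.isOpen h.contDiffOn hne hψ hK hKU hψK)
        (by linarith)) _

/-- `y` maximizes the energy `(2 / (1 + γ)) ∫ g φ ^ (1 + γ) - ∫ ‖∇ φ‖ ^ 2`. -/
lemma setIntegral_weight_mul_rpow_le (h : IsWeightedTorsionFn γ U g y)
    (hφ : IsWeightedTorsionFn γ U g₁ φ) (hγ : -1 ≤ γ) (hγ1 : γ ≤ 1) (hg : IntegrableOn g U μ)
    (hg₁ : IntegrableOn g₁ U μ) :
    ∫ z in U, g z * φ z ^ (1 + γ) ∂μ ≤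
      (1 + γ) / 2 * ∫ z in U, ‖∇ φ z‖ ^ 2 ∂μ + (1 - γ) / 2 * ∫ z in U, ‖∇ y z‖ ^ 2 ∂μ := by
  have hU := h.isOpen.measurableSet
  have hp : 0 ≤ 1 + γ := by linarith
  have hnn (ε : ℝ) : ∀ z ∈ U, 0 ≤ truncation ε (φ z) := fun z hz ↦
    truncation_nonneg (hφ.pos z hz).le
  have hlim : Tendsto (fun ε ↦ ∫ z in U, g z * truncation ε (φ z) ^ (1 + γ) ∂μ) (𝓝[>] 0)
      (𝓝 (∫ z in U, g z * φ z ^ (1 + γ) ∂μ)) := by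
    refine tendsto_integral_filter_of_dominated_convergence _
      (Eventually.of_forall fun ε ↦ hg.aestronglyMeasurable.mul
        (((hφ.contDiffOn_truncation ε).continuousOn.rpow_const
          fun _ _ ↦ .inr hp).aestronglyMeasurable hU))
      (Eventually.of_forall fun ε ↦ ae_restrict_of_forall_mem hU fun z hz ↦ ?_)
      (hφ.integrableOn_weight_mul_rpow hg hp) (ae_restrict_of_forall_mem hU fun z hz ↦ ?_)
    · rw [norm_of_nonneg (mul_nonneg (h.weight_nonneg z hz) (rpow_nonneg (hnn ε z hz) _))]
      have := h.weight_nonneg z hz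
      have := hnn ε z hz
      gcongr
      exact truncation_le (hφ.pos z hz).le
    · exact ((tendsto_truncation (hφ.pos z hz)).rpow_const (.inr hp)).const_mul _
  refine le_of_tendsto hlim (eventually_mem_nhdsWithin.mono fun ε hε ↦ ?_)
  have hgrad : ∫ z in U, ‖∇ (fun x ↦ truncation ε (φ x)) z‖ ^ 2 ∂μ ≤
      ∫ z in U, ‖∇ φ z‖ ^ 2 ∂μ := by
    refine integral_mono_of_nonneg (Eventually.of_forall fun _ ↦ sq_nonneg _)
      (hφ.integrableOn_norm_gradient_sq hγ hg₁) (ae_restrict_of_forall_mem hU fun z hz ↦ ?_)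
    exact pow_le_pow_left₀ (norm_nonneg _) (hφ.norm_gradient_truncation_le ε hz) 2
  refine (h.setIntegral_weight_mul_rpow_le_of_eq_zero hγ hγ1 hg (hφ.contDiffOn_truncation ε)
    (hnn ε) (hφ.isCompact_superlevel ε hε) (sep_subset _ _) (truncation_eq_zero hε)).trans ?_
  gcongr

end Energy

end IsWeightedTorsionFn

end WeightedTorsion

section ConformalInvariance

open ComplexConjugate

variable {G : Type*} [NormedAddCommGroup G] [NormedSpace ℝ G] {F : ℂ → ℂ} {z : ℂ}

lemma det_smul_one_complex (a : ℂ) : (a • (1 : ℂ →L[ℝ] ℂ)).det = ‖a‖ ^ 2 := by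
  rw [← Complex.normSq_eq_norm_sq, ← Algebra.norm_complex_apply, Algebra.norm_apply]
  rfl

lemma map_eq_re_smul_add_im_smul (L : ℂ →L[ℝ] G) (a : ℂ) :
    L a = a.re • L 1 + a.im • L Complex.I := by
  conv_lhs => rw [← Complex.re_add_im a]
  rw [map_add, ← map_smul, ← map_smul, Complex.real_smul, Complex.real_smul, mul_one]

lemma map_mul_one_add_map_mul_I (B : ℂ →L[ℝ] ℂ →L[ℝ] G) (a : ℂ) :
    B (a * 1) (a * 1) + B (a * Complex.I) (a * Complex.I) =
      ‖a‖ ^ 2 • (B 1 1 + B Complex.I Complex.I) := by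
  have hB (v w : ℂ) : B v w = v.re • (w.re • B 1 1 + w.im • B 1 Complex.I) +
      v.im • (w.re • B Complex.I 1 + w.im • B Complex.I Complex.I) := by
    rw [map_eq_re_smul_add_im_smul B v, add_apply, smul_apply, smul_apply,
      map_eq_re_smul_add_im_smul (B 1) w, map_eq_re_smul_add_im_smul (B Complex.I) w]
  rw [hB (a * 1), hB (a * Complex.I), ← Complex.normSq_eq_norm_sq, Complex.normSq_apply]
  simp only [mul_one, Complex.mul_I_re, Complex.mul_I_im]
  module

lemma hasFDerivAt_comp_of_differentiableAt {u : ℂ → G} (hF : DifferentiableAt ℂ F z)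
    (hu : DifferentiableAt ℝ u (F z)) :
    HasFDerivAt (fun x ↦ u (F x)) (fderiv ℝ u (F z) ∘L (deriv F z • 1)) z :=
  hu.hasFDerivAt.comp z hF.hasDerivAt.complexToReal_fderiv

lemma fderiv_fderiv_comp_apply_apply {u : ℂ → G} (hF : AnalyticAt ℂ F z)
    (hu : ContDiffAt ℝ 2 u (F z)) (v : ℂ) :
    fderiv ℝ (fderiv ℝ fun x ↦ u (F x)) z v v =
      fderiv ℝ (fderiv ℝ u) (F z) (deriv F z * v) (deriv F z * v) +
        fderiv ℝ u (F z) (deriv (deriv F) z * (v * v)) := by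
  have hcomp : ContDiffAt ℝ 2 (fun x ↦ u (F x)) z :=
    hu.comp z (hF.contDiffAt.restrict_scalars ℝ)
  have hD : DifferentiableAt ℝ (fderiv ℝ fun x ↦ u (F x)) z :=
    (hcomp.fderiv_right (m := 1) (by norm_num)).differentiableAt one_ne_zero
  have hDu : DifferentiableAt ℝ (fderiv ℝ u) (F z) :=
    (hu.fderiv_right (m := 1) (by norm_num)).differentiableAt one_ne_zero
  have heq : (fun x ↦ fderiv ℝ (fun x ↦ u (F x)) x v) =ᶠ[𝓝 z]
      fun x ↦ fderiv ℝ u (F x) (deriv F x * v) := by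
    filter_upwards [hF.eventually_analyticAt,
      hF.continuousAt.eventually (hu.eventually (by simp))] with x hx hux
    rw [(hasFDerivAt_comp_of_differentiableAt hx.differentiableAt
      (hux.differentiableAt two_ne_zero)).fderiv]
    rfl
  have hleft : fderiv ℝ (fderiv ℝ fun x ↦ u (F x)) z v v =
      fderiv ℝ (fun x ↦ fderiv ℝ (fun x ↦ u (F x)) x v) z v := by
    rw [(hD.hasFDerivAt.clm_apply (hasFDerivAt_const v z)).fderiv]
    simp
  rw [hleft, heq.fderiv_eq, ((hasFDerivAt_comp_of_differentiableAt hF.differentiableAt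
    hDu).clm_apply (hF.deriv.differentiableAt.hasDerivAt.mul_const v).complexToReal_fderiv).fderiv]
  simp only [add_apply, ContinuousLinearMap.comp_apply, smul_apply, one_apply_eq_self,
    smul_eq_mul, ContinuousLinearMap.flip_apply]
  rw [add_comm, mul_assoc]

lemma laplacian_comp_of_analyticAt {u : ℂ → G} (hF : AnalyticAt ℂ F z)
    (hu : ContDiffAt ℝ 2 u (F z)) :
    Δ (fun x ↦ u (F x)) z = ‖deriv F z‖ ^ 2 • Δ u (F z) := by
  simp only [laplacian_eq_iteratedFDeriv_complexPlane, iteratedFDeriv_two_apply,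
    Matrix.cons_val_zero, Matrix.cons_val_one, fderiv_fderiv_comp_apply_apply hF hu,
    Complex.I_mul_I, mul_one, mul_neg, map_neg]
  rw [← map_mul_one_add_map_mul_I, mul_one]
  abel

lemma gradient_comp_of_differentiableAt {u : ℂ → ℝ} (hF : DifferentiableAt ℂ F z)
    (hu : DifferentiableAt ℝ u (F z)) :
    ∇ (fun x ↦ u (F x)) z = conj (deriv F z) * ∇ u (F z) := by
  apply HasGradientAt.gradient
  rw [hasGradientAt_iff_hasFDerivAt]
  refine (hasFDerivAt_comp_of_differentiableAt hF hu).congr_fderiv ?_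
  ext v
  have hL : (fderiv ℝ u (F z) ∘L (deriv F z • 1)) v = ⟪∇ u (F z), deriv F z * v⟫_ℝ :=
    inner_gradient_left.symm
  rw [hL, toDual_apply_apply, Complex.inner, Complex.inner, map_mul, Complex.conj_conj]
  ring_nf

lemma setIntegral_norm_gradient_sq_image {u : ℂ → ℝ} {U : Set ℂ} (hU : IsOpen U)
    (hF : DifferentiableOn ℂ F U) (hinj : InjOn F U)
    (hu : ∀ x ∈ U, DifferentiableAt ℝ u (F x)) :
    ∫ x in F '' U, ‖∇ u x‖ ^ 2 = ∫ z in U, ‖∇ (fun x ↦ u (F x)) z‖ ^ 2 := by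
  have hFd : ∀ x ∈ U, DifferentiableAt ℂ F x := fun x hx ↦ hF.differentiableAt (hU.mem_nhds hx)
  rw [integral_image_eq_integral_abs_det_fderiv_smul volume hU.measurableSet
    (fun x hx ↦ (hFd x hx).hasDerivAt.complexToReal_fderiv.hasFDerivWithinAt) hinj]
  refine setIntegral_congr_fun hU.measurableSet fun z hz ↦ ?_
  simp only [gradient_comp_of_differentiableAt (hFd z hz) (hu z hz), det_smul_one_complex,
    abs_of_nonneg (sq_nonneg ‖deriv F z‖), smul_eq_mul, norm_mul, Complex.norm_conj, mul_pow]

end ConformalInvariance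

section Pullback

variable {γ : ℝ} {O U : Set ℂ} {u : ℂ → ℝ} {F : ℂ → ℂ}

lemma laplacian_eq_lapC (u : ℂ → ℝ) : Δ u = lapC u := by
  simp only [laplacian_eq_iteratedFDeriv_complexPlane, iteratedFDeriv_two_apply]
  rfl

lemma IsTorsionFnC.isWeightedTorsionFn_comp (h : IsTorsionFnC γ O u) (hU : IsOpen U)
    (hUb : Bornology.IsBounded U) (hO : IsOpen O) (hF : DiffContOnCl ℂ F U) (hFU : MapsTo F U O)
    (hF' : MapsTo F (frontier U) (frontier O)) :
    IsWeightedTorsionFn γ U (fun z ↦ ‖deriv F z‖ ^ 2) (fun z ↦ u (F z)) := by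
  obtain ⟨hcont, -, hC2, hlap, hpos, hfr⟩ := h
  have hFa : AnalyticOnNhd ℂ F U := hF.differentiableOn.analyticOnNhd hU
  refine ⟨hU, hC2.comp ((hF.differentiableOn.contDiffOn hU).restrict_scalars ℝ) hFU,
    fun z hz ↦ hpos _ (hFU hz), fun ε hε ↦ ?_, fun z hz ↦ ?_, fun z _ ↦ by positivity⟩
  · have hclosure : ContinuousOn (fun z ↦ u (F z)) (closure U) :=
      hcont.comp hF.continuousOn (hFU.closure_of_continuousOn hF.continuousOn)
    have hsuper : {z ∈ U | ε ≤ u (F z)} = closure U ∩ (fun z ↦ u (F z)) ⁻¹' Ici ε := by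
      refine Subset.antisymm (inter_subset_inter_left _ subset_closure) fun z hz ↦ ⟨?_, hz.2⟩
      by_contra hzU
      have h0 : u (F z) = 0 := hfr _ (hF' (hU.frontier_eq ▸ ⟨hz.1, hzU⟩))
      exact hε.not_ge (h0 ▸ hz.2)
    rw [hsuper]
    exact hUb.isCompact_closure.of_isClosed_subset
      (hclosure.preimage_isClosed_of_isClosed isClosed_closure isClosed_Ici) inter_subset_left
  · rw [laplacian_comp_of_analyticAt (hFa z hz) (hC2.contDiffAt (hO.mem_nhds (hFU hz))),
      laplacian_eq_lapC, hlap _ (hFU hz), smul_eq_mul, mul_neg]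

end Pullback

section Dilation

open Metric ComplexConjugate

variable {h : ℂ → ℂ} {w : ℂ → ℝ} {μ : Measure ℂ} {a ζ z : ℂ} {b M : ℝ}

lemma mul_mem_closedBall_norm (ζ : ℂ) (hz : z ∈ ball (0 : ℂ) 1) :
    ζ * z ∈ closedBall (0 : ℂ) ‖ζ‖ := by
  rw [mem_closedBall_zero_iff, norm_mul]
  exact mul_le_of_le_one_right (norm_nonneg ζ) (mem_ball_zero_iff.1 hz).le

lemma integrableOn_dilation_mul {A : Type*} [NormedRing A] {p k : ℂ → A}
    (hp : ContinuousOn p (ball 0 1)) (hk : IntegrableOn k (ball 0 1) μ) (hζ : ‖ζ‖ < 1) :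
    IntegrableOn (fun z ↦ p (ζ * z) * k z) (ball 0 1) μ := by
  have hp' : ContinuousOn p (closedBall 0 ‖ζ‖) := hp.mono (closedBall_subset_ball hζ)
  obtain ⟨C, hC⟩ := (isCompact_closedBall (0 : ℂ) ‖ζ‖).exists_bound_of_continuousOn hp'
  refine Integrable.bdd_mul (c := C) hk ?_ ?_
  · exact (hp'.comp (by fun_prop) fun z hz ↦ mul_mem_closedBall_norm ζ hz).aestronglyMeasurable
      measurableSet_ball
  · exact ae_restrict_of_forall_mem measurableSet_ball fun z hz ↦
      hC _ (mul_mem_closedBall_norm ζ hz)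

lemma differentiableOn_integral_dilation_mul {k : ℂ → ℂ} (hh : DifferentiableOn ℂ h (ball 0 1))
    (hk : IntegrableOn k (ball 0 1) μ) :
    DifferentiableOn ℂ (fun ζ ↦ ∫ z in ball 0 1, h (ζ * z) * k z ∂μ) (ball 0 1) := by
  intro ζ hζ
  obtain ⟨ρ, hζρ, hρ⟩ := exists_between (mem_ball_zero_iff.1 hζ)
  have hh' : ContinuousOn (deriv h) (ball 0 1) := (hh.deriv isOpen_ball).continuousOn
  obtain ⟨C, hC⟩ := (isCompact_closedBall (0 : ℂ) ρ).exists_bound_of_continuousOn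
    (hh'.mono (closedBall_subset_ball hρ))
  have hmem : ∀ z ∈ ball (0 : ℂ) 1, ∀ ξ ∈ ball (0 : ℂ) ρ, ξ * z ∈ closedBall (0 : ℂ) ρ :=
    fun z hz ξ hξ ↦ closedBall_subset_closedBall (mem_ball_zero_iff.1 hξ).le
      (mul_mem_closedBall_norm ξ hz)
  have hζk : IntegrableOn (fun z ↦ z * k z) (ball 0 1) μ :=
    Integrable.bdd_mul (c := 1) hk (by fun_prop)
      (ae_restrict_of_forall_mem measurableSet_ball fun z hz ↦ (mem_ball_zero_iff.1 hz).le)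
  refine (hasDerivAt_integral_of_dominated_loc_of_deriv_le
    (μ := μ.restrict (ball 0 1)) (F := fun ξ z ↦ h (ξ * z) * k z)
    (F' := fun ξ z ↦ deriv h (ξ * z) * (z * k z)) (bound := fun z ↦ C * ‖k z‖)
    (isOpen_ball.mem_nhds (mem_ball_zero_iff.2 hζρ)) ?_
    (integrableOn_dilation_mul hh.continuousOn hk (hζρ.trans hρ))
    (integrableOn_dilation_mul hh' hζk (hζρ.trans hρ)).aestronglyMeasurable ?_
    (hk.norm.const_mul C) ?_).2.differentiableAt.differentiableWithinAt
  · filter_upwards [isOpen_ball.mem_nhds hζ] with ξ hξ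
    exact (integrableOn_dilation_mul hh.continuousOn hk
      (mem_ball_zero_iff.1 hξ)).aestronglyMeasurable
  · refine ae_restrict_of_forall_mem measurableSet_ball fun z hz ξ hξ ↦ ?_
    rw [norm_mul, norm_mul]
    exact mul_le_mul (hC _ (hmem z hz ξ hξ))
      (mul_le_of_le_one_left (norm_nonneg _) (mem_ball_zero_iff.1 hz).le) (by positivity)
      ((norm_nonneg _).trans (hC _ (hmem z hz ξ hξ)))
  · refine ae_restrict_of_forall_mem measurableSet_ball fun z hz ξ hξ ↦ ?_
    have hd := (hh.differentiableAt (isOpen_ball.mem_nhds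
      (closedBall_subset_ball hρ (hmem z hz ξ hξ)))).hasDerivAt
    have := (HasDerivAt.comp (h := fun x ↦ x * z) ξ hd (hasDerivAt_mul_const z)).mul_const (k z)
    rwa [mul_assoc] at this

/-- The inner product, in `L²` of the unit disc with weight `w`, of the dilations of `h` by `ζ` and
by `a`. It is holomorphic in `ζ`. -/
noncomputable def dilationInner (h : ℂ → ℂ) (w : ℂ → ℝ) (μ : Measure ℂ) (a ζ : ℂ) : ℂ :=
  ∫ z in ball 0 1, h (ζ * z) * (conj (h (a * z)) * w z) ∂μ

/-- The squared norm, in `L²` of the unit disc with weight `w`, of the dilation of `h` by `ζ`. -/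
noncomputable def dilationNormSq (h : ℂ → ℂ) (w : ℂ → ℝ) (μ : Measure ℂ) (ζ : ℂ) : ℝ :=
  ∫ z in ball 0 1, ‖h (ζ * z)‖ ^ 2 * w z ∂μ

lemma dilationInner_self (h : ℂ → ℂ) (w : ℂ → ℝ) (μ : Measure ℂ) (a : ℂ) :
    dilationInner h w μ a a = dilationNormSq h w μ a := by
  rw [dilationInner, dilationNormSq, ← integral_complex_ofReal]
  refine integral_congr_ae (Eventually.of_forall fun z ↦ ?_)
  simp only [← mul_assoc, Complex.mul_conj', Complex.ofReal_mul, Complex.ofReal_pow]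

lemma integrableOn_conj_dilation_mul (hh : ContinuousOn h (ball 0 1))
    (hw : IntegrableOn w (ball 0 1) μ) (ha : ‖a‖ < 1) :
    IntegrableOn (fun z ↦ conj (h (a * z)) * (w z : ℂ)) (ball 0 1) μ :=
  integrableOn_dilation_mul (p := fun z ↦ conj (h z)) (Complex.continuous_conj.comp_continuousOn hh)
    (Integrable.ofReal hw) ha

lemma integrableOn_norm_dilation_sq_mul (hh : ContinuousOn h (ball 0 1))
    (hw : IntegrableOn w (ball 0 1) μ) (hζ : ‖ζ‖ < 1) :
    IntegrableOn (fun z ↦ ‖h (ζ * z)‖ ^ 2 * w z) (ball 0 1) μ :=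
  integrableOn_dilation_mul (p := fun z ↦ ‖h z‖ ^ 2) (hh.norm.pow 2) hw hζ

lemma norm_dilationInner_le (hh : ContinuousOn h (ball 0 1)) (hw : IntegrableOn w (ball 0 1) μ)
    (hw0 : ∀ z ∈ ball 0 1, 0 ≤ w z) (ha : ‖a‖ < 1) (hζ : ‖ζ‖ < 1) :
    ‖dilationInner h w μ a ζ‖ ≤ (dilationNormSq h w μ ζ + dilationNormSq h w μ a) / 2 := by
  have hNζ := integrableOn_norm_dilation_sq_mul hh hw hζ
  have hNa := integrableOn_norm_dilation_sq_mul hh hw ha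
  rw [dilationInner, dilationNormSq, dilationNormSq, ← integral_add hNζ hNa, ← integral_div]
  refine norm_integral_le_of_norm_le ((hNζ.add hNa).div_const 2)
    (ae_restrict_of_forall_mem measurableSet_ball fun z hz ↦ ?_)
  rw [norm_mul, norm_mul, Complex.norm_conj, Complex.norm_real, norm_of_nonneg (hw0 z hz)]
  have := mul_nonneg (hw0 z hz) (sq_nonneg (‖h (ζ * z)‖ - ‖h (a * z)‖))
  linarith

lemma setIntegral_norm_dilation_sub_sq_mul (hh : ContinuousOn h (ball 0 1))
    (hw : IntegrableOn w (ball 0 1) μ) (ha : ‖a‖ < 1) (hζ : ‖ζ‖ < 1) :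
    ∫ z in ball 0 1, ‖h (ζ * z) - h (a * z)‖ ^ 2 * w z ∂μ =
      dilationNormSq h w μ ζ - 2 * (dilationInner h w μ a ζ).re + dilationNormSq h w μ a := by
  have hNζ := integrableOn_norm_dilation_sq_mul hh hw hζ
  have hNa := integrableOn_norm_dilation_sq_mul hh hw ha
  have hI := integrableOn_dilation_mul hh (integrableOn_conj_dilation_mul hh hw ha) hζ
  have hIre : IntegrableOn (fun z ↦ (h (ζ * z) * (conj (h (a * z)) * w z)).re) (ball 0 1) μ := hI.re
  have hre : (dilationInner h w μ a ζ).re =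
      ∫ z in ball 0 1, (h (ζ * z) * (conj (h (a * z)) * w z)).re ∂μ := (integral_re hI).symm
  have hsub : IntegrableOn (fun z ↦ ‖h (ζ * z)‖ ^ 2 * w z -
      2 * (h (ζ * z) * (conj (h (a * z)) * w z)).re) (ball 0 1) μ := hNζ.sub (hIre.const_mul 2)
  rw [hre, dilationNormSq, dilationNormSq, ← integral_const_mul,
    ← integral_sub hNζ (hIre.const_mul 2), ← integral_add hsub hNa]
  refine integral_congr_ae (Eventually.of_forall fun z ↦ ?_)
  simp only [← mul_assoc, Complex.re_mul_ofReal, Complex.sq_norm, Complex.normSq_sub]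
  ring

lemma differentiableOn_dilationInner (hh : DifferentiableOn ℂ h (ball 0 1))
    (hw : IntegrableOn w (ball 0 1) μ) (ha : ‖a‖ < 1) :
    DifferentiableOn ℂ (dilationInner h w μ a) (ball 0 1) :=
  differentiableOn_integral_dilation_mul hh (integrableOn_conj_dilation_mul hh.continuousOn hw ha)

lemma dilationNormSq_le_of_forall_norm_eq (hh : DifferentiableOn ℂ h (ball 0 1))
    (hw : IntegrableOn w (ball 0 1) μ) (hw0 : ∀ z ∈ ball 0 1, 0 ≤ w z) (hab : ‖a‖ < b)
    (hb : b < 1) (hM : ∀ ζ, ‖ζ‖ = b → dilationNormSq h w μ ζ ≤ M) :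
    dilationNormSq h w μ a ≤ M := by
  have hdiff : DiffContOnCl ℂ (dilationInner h w μ a) (ball 0 b) :=
    ((differentiableOn_dilationInner hh hw (hab.trans hb)).mono
      (closure_ball_subset_closedBall.trans (closedBall_subset_ball hb))).diffContOnCl
  have hself := Complex.norm_le_of_forall_mem_frontier_norm_le
    (C := (M + dilationNormSq h w μ a) / 2) isBounded_ball hdiff (fun ζ hζ ↦ ?_)
    (subset_closure (mem_ball_zero_iff.2 hab))
  · rw [dilationInner_self, Complex.norm_real] at hself
    linarith [le_norm_self (dilationNormSq h w μ a)]
  · have hζb : ‖ζ‖ = b := mem_sphere_zero_iff_norm.1 (frontier_ball_subset_sphere hζ)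
    refine (norm_dilationInner_le hh.continuousOn hw hw0 (hab.trans hb) (hζb ▸ hb)).trans ?_
    linarith [hM ζ hζb]

lemma setIntegral_norm_apply_zero_sub_sq_mul_nonpos (hh : DifferentiableOn ℂ h (ball 0 1))
    (hw : IntegrableOn w (ball 0 1) μ) (hw0 : ∀ z ∈ ball 0 1, 0 ≤ w z) (hab : ‖a‖ < b)
    (hb : b < 1) (hM : ∀ ζ, ‖ζ‖ = b → dilationNormSq h w μ ζ ≤ dilationNormSq h w μ a) :
    ∫ z in ball 0 1, ‖h 0 - h (a * z)‖ ^ 2 * w z ∂μ ≤ 0 := by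
  have ha : ‖a‖ < 1 := hab.trans hb
  have hle : ∀ ζ ∈ ball 0 b, dilationNormSq h w μ ζ ≤ dilationNormSq h w μ a := fun ζ hζ ↦
    dilationNormSq_le_of_forall_norm_eq hh hw hw0 (mem_ball_zero_iff.1 hζ) hb hM
  have hmax : IsMaxOn (norm ∘ dilationInner h w μ a) (ball 0 b) a := fun ζ hζ ↦ by
    have hζ1 : ‖ζ‖ < 1 := (mem_ball_zero_iff.1 hζ).trans hb
    simp only [mem_ofPred_eq, Function.comp_apply, dilationInner_self, Complex.norm_real]
    linarith [norm_dilationInner_le hh.continuousOn hw hw0 ha hζ1, hle ζ hζ,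
      le_norm_self (dilationNormSq h w μ a)]
  have h0b : (0 : ℂ) ∈ ball (0 : ℂ) b := mem_ball_self ((norm_nonneg a).trans_lt hab)
  have hconst : dilationInner h w μ a 0 = dilationNormSq h w μ a :=
    (Complex.eqOn_of_isPreconnected_of_isMaxOn_norm (convex_ball _ _).isPreconnected isOpen_ball
      ((differentiableOn_dilationInner hh hw ha).mono (ball_subset_ball hb.le))
      (mem_ball_zero_iff.2 hab) hmax h0b).trans (dilationInner_self h w μ a)
  have hexp := setIntegral_norm_dilation_sub_sq_mul hh.continuousOn hw ha (ζ := 0) (by simp)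
  simp only [zero_mul, hconst, Complex.ofReal_re] at hexp
  linarith [hle 0 h0b]

lemma eqOn_const_of_forall_norm_eq_dilationNormSq_le [μ.IsOpenPosMeasure]
    (hh : DifferentiableOn ℂ h (ball 0 1)) (hw : IntegrableOn w (ball 0 1) μ)
    (hw0 : ∀ z ∈ ball 0 1, 0 < w z) (ha0 : a ≠ 0) (hab : ‖a‖ < b) (hb : b < 1)
    (hM : ∀ ζ, ‖ζ‖ = b → dilationNormSq h w μ ζ ≤ dilationNormSq h w μ a) :
    EqOn h (fun _ ↦ h 0) (ball 0 1) := by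
  have ha : ‖a‖ < 1 := hab.trans hb
  have hnonneg : 0 ≤ᵐ[μ.restrict (ball 0 1)] fun z ↦ ‖h 0 - h (a * z)‖ ^ 2 * w z :=
    ae_restrict_of_forall_mem measurableSet_ball fun z hz ↦
      mul_nonneg (sq_nonneg _) (hw0 z hz).le
  have hcont : ContinuousOn (fun z ↦ h (a * z)) (ball 0 1) :=
    hh.continuousOn.comp (by fun_prop) fun z hz ↦
      closedBall_subset_ball ha (mul_mem_closedBall_norm a hz)
  have hint : IntegrableOn (fun z ↦ ‖h 0 - h (a * z)‖ ^ 2 * w z) (ball 0 1) μ :=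
    integrableOn_dilation_mul (p := fun z ↦ ‖h 0 - h z‖ ^ 2)
      ((continuousOn_const.sub hh.continuousOn).norm.pow 2) hw ha
  have hae := (integral_eq_zero_iff_of_nonneg_ae hnonneg hint).1 <| le_antisymm
    (setIntegral_norm_apply_zero_sub_sq_mul_nonpos hh hw (fun z hz ↦ (hw0 z hz).le) hab hb hM)
    (integral_nonneg_of_ae hnonneg)
  have hdil : EqOn (fun z ↦ h (a * z)) (fun _ ↦ h 0) (ball 0 1) := by
    refine Measure.eqOn_open_of_ae_eq (μ := μ) ?_ isOpen_ball hcont continuousOn_const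
    filter_upwards [hae, ae_restrict_mem measurableSet_ball] with z hz hzb
    have := (mul_eq_zero.1 hz).resolve_right (hw0 z hzb).ne'
    exact (sub_eq_zero.1 (norm_eq_zero.1 (pow_eq_zero_iff two_ne_zero |>.1 this))).symm
  refine (hh.analyticOnNhd isOpen_ball).eqOn_of_preconnected_of_eventuallyEq analyticOnNhd_const
    (convex_ball _ _).isPreconnected (mem_ball_self one_pos) ?_
  filter_upwards [ball_mem_nhds (0 : ℂ) (norm_pos_iff.2 ha0)] with z hz
  have hza : z / a ∈ ball (0 : ℂ) 1 := by
    rw [mem_ball_zero_iff, norm_div]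
    exact (div_lt_one (norm_pos_iff.2 ha0)).2 (mem_ball_zero_iff.1 hz)
  simpa only [mul_div_cancel₀ z ha0] using hdil hza

end Dilation

section Rigidity

open Metric

variable {γ a b : ℝ} {f : ℂ → ℂ} {u : ℝ → ℂ → ℝ} {c : ℂ}

lemma image_comp_mul_left_ball (f : ℂ → ℂ) (hc : c ≠ 0) :
    (fun z ↦ f (c * z)) '' ball 0 1 = f '' ball 0 ‖c‖ := by
  rw [← smul_unitBall (E := ℂ) hc, ← image_smul, image_image]
  rfl

lemma isOpen_image_of_differentiableOn_of_injOn {U : Set ℂ} (hU : IsOpen U)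
    (hf : DifferentiableOn ℂ f U) (hinj : InjOn f U) : IsOpen (f '' U) := by
  refine isOpen_iff_mem_nhds.2 (forall_mem_image.2 fun z hz ↦ ?_)
  have hzU : U ∈ 𝓝 z := hU.mem_nhds hz
  rcases (hf.analyticAt hzU).eventually_constant_or_nhds_le_map_nhds with hconst | hle
  · have hne : ∀ᶠ x in 𝓝[≠] z, x ≠ z := self_mem_nhdsWithin
    obtain ⟨x, ⟨hxz, hxU⟩, hx⟩ :=
      (((hconst.and hzU).filter_mono nhdsWithin_le_nhds).and hne).exists
    exact (hx (hinj hxU hz hxz)).elim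
  · exact hle (image_mem_map hzU)

lemma mapsTo_frontier_image {X Y : Type*} [TopologicalSpace X] [TopologicalSpace Y] {F : X → Y}
    {U : Set X} (hF : ContinuousOn F (closure U)) (hinj : InjOn F (closure U)) (hU : IsOpen U)
    (hFU : IsOpen (F '' U)) : MapsTo F (frontier U) (frontier (F '' U)) := by
  rw [hU.frontier_eq, hFU.frontier_eq]
  exact fun z hz ↦ ⟨(mapsTo_image F U).closure_of_continuousOn hF hz.1,
    fun hFz ↦ hz.2 ((hinj.mem_image_iff subset_closure hz.1).1 hFz)⟩

lemma exists_eq_mul_add_of_eqOn_deriv {U : Set ℂ} (hU : IsOpen U) (hUc : IsPreconnected U)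
    (hf : DifferentiableOn ℂ f U) (hc : EqOn (deriv f) (fun _ ↦ c) U) :
    ∃ d, ∀ z ∈ U, f z = c * z + d := by
  have hd : ∀ z ∈ U, HasDerivAt (fun z ↦ f z - c * z) 0 z := fun z hz ↦ by
    have h1 := (hf.differentiableAt (hU.mem_nhds hz)).hasDerivAt
    rw [hc hz] at h1
    simpa using h1.fun_sub ((hasDerivAt_id z).const_mul c)
  obtain ⟨d, hd⟩ := hU.exists_is_const_of_deriv_eq_zero hUc
    (fun z hz ↦ (hd z hz).differentiableAt.differentiableWithinAt) fun z hz ↦ (hd z hz).deriv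
  exact ⟨d, fun z hz ↦ by rw [← hd z hz, add_sub_cancel]⟩

/-- The torsion function `u ‖c‖` of `f '' ball 0 ‖c‖`, pulled back to the unit disc by
`z ↦ f (c * z)`. The scalar makes the equation `Δ y = -‖deriv f (c * z)‖ ^ 2 * y ^ γ` free of
further dependence on `c`. -/
noncomputable def torsionPullback (γ : ℝ) (f : ℂ → ℂ) (u : ℝ → ℂ → ℝ) (c z : ℂ) : ℝ :=
  ‖c‖ ^ (-(2 / (1 - γ))) * u ‖c‖ (f (c * z))

/-- The rigidity of `f '' ball 0 r` with torsion function `u r`, divided by the power of `r` by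
which the rigidity of `ball 0 r` scales. -/
noncomputable def normalizedRigidity (γ : ℝ) (f : ℂ → ℂ) (u : ℝ → ℂ → ℝ) (r : ℝ) : ℝ :=
  r ^ (-(4 / (1 - γ))) * ∫ z in f '' ball 0 r, ‖∇ (u r) z‖ ^ 2

lemma mapsTo_mul_left_closedBall (hc1 : ‖c‖ < 1) :
    MapsTo (c * ·) (closedBall (0 : ℂ) 1) (ball 0 1) := fun z hz ↦ by
  rw [mem_ball_zero_iff, norm_mul]
  exact mul_lt_one_of_nonneg_of_lt_one_left (norm_nonneg c) hc1 (mem_closedBall_zero_iff.1 hz)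

lemma differentiableOn_comp_mul_left (hf : DifferentiableOn ℂ f (ball 0 1)) (hc1 : ‖c‖ < 1) :
    DifferentiableOn ℂ (fun z ↦ f (c * z)) (closedBall 0 1) :=
  hf.comp (by fun_prop) (mapsTo_mul_left_closedBall hc1)

lemma injOn_comp_mul_left (hinj : InjOn f (ball 0 1)) (hc : c ≠ 0) (hc1 : ‖c‖ < 1) :
    InjOn (fun z ↦ f (c * z)) (closedBall 0 1) :=
  hinj.comp (mul_right_injective₀ hc).injOn (mapsTo_mul_left_closedBall hc1)

lemma isWeightedTorsionFn_torsionPullback (hγ : γ ≠ 1) (hinj : InjOn f (ball 0 1))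
    (hf : DifferentiableOn ℂ f (ball 0 1)) (hc : c ≠ 0) (hc1 : ‖c‖ < 1)
    (hu : IsTorsionFnC γ (f '' ball 0 ‖c‖) (u ‖c‖)) :
    IsWeightedTorsionFn γ (ball 0 1) (fun z ↦ ‖deriv f (c * z)‖ ^ 2) (torsionPullback γ f u c) := by
  have hcp : 0 < ‖c‖ := norm_pos_iff.2 hc
  have hcl : closure (ball (0 : ℂ) 1) = closedBall 0 1 := closure_ball 0 one_ne_zero
  have hF := differentiableOn_comp_mul_left hf hc1
  have hFinj := injOn_comp_mul_left hinj hc hc1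
  rw [← image_comp_mul_left_ball f hc] at hu
  have hO : IsOpen ((fun z ↦ f (c * z)) '' ball 0 1) :=
    isOpen_image_of_differentiableOn_of_injOn isOpen_ball (hF.mono ball_subset_closedBall)
      (hFinj.mono ball_subset_closedBall)
  rw [← hcl] at hF hFinj
  have h := (hu.isWeightedTorsionFn_comp isOpen_ball isBounded_ball hO hF.diffContOnCl
    (mapsTo_image _ _) (mapsTo_frontier_image hF.continuousOn hFinj isOpen_ball hO)).const_mul
    (rpow_pos_of_pos hcp (-(2 / (1 - γ))))
  have hγ' : 1 - γ ≠ 0 := sub_ne_zero.2 hγ.symm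
  have hscale : (‖c‖ ^ (-(2 / (1 - γ)))) ^ (1 - γ) * ‖c‖ ^ 2 = 1 := by
    rw [← rpow_mul hcp.le, neg_mul, div_mul_cancel₀ _ hγ', rpow_neg hcp.le, rpow_ofNat,
      inv_mul_cancel₀ (pow_ne_zero 2 hcp.ne')]
  simp only [deriv_comp_mul_left, smul_eq_mul, norm_mul, mul_pow, ← mul_assoc, hscale,
    one_mul] at h
  exact h

lemma setIntegral_norm_gradient_torsionPullback_sq (hinj : InjOn f (ball 0 1))
    (hf : DifferentiableOn ℂ f (ball 0 1)) (hc : c ≠ 0) (hc1 : ‖c‖ < 1)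
    (hu : DifferentiableOn ℝ (u ‖c‖) (f '' ball 0 ‖c‖)) :
    ∫ z in ball 0 1, ‖∇ (torsionPullback γ f u c) z‖ ^ 2 = normalizedRigidity γ f u ‖c‖ := by
  have hcp : 0 < ‖c‖ := norm_pos_iff.2 hc
  have hF := (differentiableOn_comp_mul_left hf hc1).mono ball_subset_closedBall
  have hFinj := (injOn_comp_mul_left hinj hc hc1).mono ball_subset_closedBall
  have hO := isOpen_image_of_differentiableOn_of_injOn isOpen_ball hF hFinj
  rw [← image_comp_mul_left_ball f hc] at hu
  have hud : ∀ z ∈ ball (0 : ℂ) 1, DifferentiableAt ℝ (u ‖c‖) (f (c * z)) := fun z hz ↦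
    hu.differentiableAt (hO.mem_nhds (mem_image_of_mem _ hz))
  rw [normalizedRigidity, ← image_comp_mul_left_ball f hc,
    setIntegral_norm_gradient_sq_image isOpen_ball hF hFinj hud, ← integral_const_mul]
  refine setIntegral_congr_fun measurableSet_ball fun z hz ↦ ?_
  have hgrad : ∇ (torsionPullback γ f u c) z =
      ‖c‖ ^ (-(2 / (1 - γ))) • ∇ (fun x ↦ u ‖c‖ (f (c * x))) z :=
    gradient_const_mul ((hud z hz).comp z
      ((hF.differentiableAt (isOpen_ball.mem_nhds hz)).restrictScalars ℝ)) _
  have hpow : (‖c‖ ^ (-(2 / (1 - γ)))) ^ 2 = ‖c‖ ^ (-(4 / (1 - γ))) := by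
    rw [← rpow_natCast, ← rpow_mul hcp.le]
    ring_nf
  simp only [hgrad, norm_smul, norm_of_nonneg (rpow_nonneg hcp.le _), mul_pow, hpow]

lemma integrableOn_norm_deriv_dilation_sq (hf : DifferentiableOn ℂ f (ball 0 1)) (hc1 : ‖c‖ < 1) :
    IntegrableOn (fun z ↦ ‖deriv f (c * z)‖ ^ 2) (ball 0 1) := by
  simpa only [mul_one] using integrableOn_dilation_mul (p := fun z ↦ ‖deriv f z‖ ^ 2)
    (k := fun _ ↦ 1) ((hf.deriv isOpen_ball).continuousOn.norm.pow 2)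
    (integrableOn_const measure_ball_lt_top.ne) hc1

lemma IsTorsionFnC.differentiableOn {O : Set ℂ} {v : ℂ → ℝ} (hv : IsTorsionFnC γ O v) :
    DifferentiableOn ℝ v O :=
  hv.2.2.1.differentiableOn two_ne_zero

lemma dilationNormSq_torsionPullback_self (hγ : -1 ≤ γ) (hγ1 : γ ≠ 1) (hinj : InjOn f (ball 0 1))
    (hf : DifferentiableOn ℂ f (ball 0 1)) (hc : c ≠ 0) (hc1 : ‖c‖ < 1)
    (hu : IsTorsionFnC γ (f '' ball 0 ‖c‖) (u ‖c‖)) :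
    dilationNormSq (deriv f) (fun z ↦ torsionPullback γ f u c z ^ (1 + γ)) volume c =
      normalizedRigidity γ f u ‖c‖ := by
  rw [← setIntegral_norm_gradient_torsionPullback_sq hinj hf hc hc1 hu.differentiableOn,
    (isWeightedTorsionFn_torsionPullback hγ1 hinj hf hc hc1 hu).setIntegral_norm_gradient_sq hγ
      (integrableOn_norm_deriv_dilation_sq hf hc1), dilationNormSq]

lemma dilationNormSq_torsionPullback_le (hγ : -1 ≤ γ) (hγ1 : γ < 1) (hinj : InjOn f (ball 0 1))
    (hf : DifferentiableOn ℂ f (ball 0 1)) {ζ : ℂ} (hc : c ≠ 0) (hc1 : ‖c‖ < 1) (hζ : ζ ≠ 0)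
    (hζ1 : ‖ζ‖ < 1) (hu : IsTorsionFnC γ (f '' ball 0 ‖c‖) (u ‖c‖))
    (huζ : IsTorsionFnC γ (f '' ball 0 ‖ζ‖) (u ‖ζ‖)) :
    dilationNormSq (deriv f) (fun z ↦ torsionPullback γ f u c z ^ (1 + γ)) volume ζ ≤
      (1 + γ) / 2 * normalizedRigidity γ f u ‖c‖ +
        (1 - γ) / 2 * normalizedRigidity γ f u ‖ζ‖ := by
  rw [← setIntegral_norm_gradient_torsionPullback_sq hinj hf hc hc1 hu.differentiableOn,
    ← setIntegral_norm_gradient_torsionPullback_sq hinj hf hζ hζ1 huζ.differentiableOn]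
  have hyζ := isWeightedTorsionFn_torsionPullback hγ1.ne hinj hf hζ hζ1 huζ
  have hyc := isWeightedTorsionFn_torsionPullback hγ1.ne hinj hf hc hc1 hu
  exact hyζ.setIntegral_weight_mul_rpow_le hyc hγ hγ1.le
    (integrableOn_norm_deriv_dilation_sq hf hζ1) (integrableOn_norm_deriv_dilation_sq hf hc1)

lemma integrableOn_torsionPullback_rpow (hγ : -1 ≤ γ) (hγ1 : γ ≠ 1) (hinj : InjOn f (ball 0 1))
    (hf : DifferentiableOn ℂ f (ball 0 1)) (hc : c ≠ 0) (hc1 : ‖c‖ < 1)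
    (hu : IsTorsionFnC γ (f '' ball 0 ‖c‖) (u ‖c‖)) :
    IntegrableOn (fun z ↦ torsionPullback γ f u c z ^ (1 + γ)) (ball 0 1) := by
  have h := isWeightedTorsionFn_torsionPullback hγ1 hinj hf hc hc1 hu
  simpa only [one_mul] using h.integrableOn_weight_mul_rpow (g₁ := fun _ ↦ 1) (p := 1 + γ)
    (μ := volume) (integrableOn_const measure_ball_lt_top.ne) (by linarith)

lemma normalizedRigidity_le (hγ : -1 ≤ γ) (hγ1 : γ < 1) (hinj : InjOn f (ball 0 1))
    (hf : DifferentiableOn ℂ f (ball 0 1)) (ha : 0 < a) (hab : a < b) (hb : b < 1)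
    (hua : IsTorsionFnC γ (f '' ball 0 a) (u a)) (hub : IsTorsionFnC γ (f '' ball 0 b) (u b)) :
    normalizedRigidity γ f u a ≤ normalizedRigidity γ f u b := by
  obtain ⟨c, rfl⟩ : ∃ c : ℂ, ‖c‖ = a := ⟨a, by rw [Complex.norm_real, norm_of_nonneg ha.le]⟩
  have hc : c ≠ 0 := norm_pos_iff.1 ha
  have hc1 : ‖c‖ < 1 := hab.trans hb
  have hy := isWeightedTorsionFn_torsionPullback hγ1.ne hinj hf hc hc1 hua
  have hcircle : ∀ ζ : ℂ, ‖ζ‖ = b →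
      dilationNormSq (deriv f) (fun z ↦ torsionPullback γ f u c z ^ (1 + γ)) volume ζ ≤
        (1 + γ) / 2 * normalizedRigidity γ f u ‖c‖ +
          (1 - γ) / 2 * normalizedRigidity γ f u b := by
    rintro ζ rfl
    exact dilationNormSq_torsionPullback_le hγ hγ1 hinj hf hc hc1
      (norm_pos_iff.1 (ha.trans hab)) hb hua hub
  have hmax := dilationNormSq_le_of_forall_norm_eq (hf.deriv isOpen_ball)
    (integrableOn_torsionPullback_rpow hγ hγ1.ne hinj hf hc hc1 hua)
    (fun z hz ↦ rpow_nonneg (hy.pos z hz).le _) hab hb hcircle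
  rw [dilationNormSq_torsionPullback_self hγ hγ1.ne hinj hf hc hc1 hua] at hmax
  have h1 : 0 < 1 - γ := sub_pos.2 hγ1
  exact le_of_mul_le_mul_left (by linarith) h1

lemma exists_eq_mul_add_of_normalizedRigidity_le (hγ : -1 ≤ γ) (hγ1 : γ < 1)
    (hinj : InjOn f (ball 0 1)) (hf : DifferentiableOn ℂ f (ball 0 1)) (ha : 0 < a) (hab : a < b)
    (hb : b < 1) (hua : IsTorsionFnC γ (f '' ball 0 a) (u a))
    (hub : IsTorsionFnC γ (f '' ball 0 b) (u b))
    (hle : normalizedRigidity γ f u b ≤ normalizedRigidity γ f u a) :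
    ∃ p q : ℂ, ∀ z ∈ ball (0 : ℂ) 1, f z = p * z + q := by
  obtain ⟨c, rfl⟩ : ∃ c : ℂ, ‖c‖ = a := ⟨a, by rw [Complex.norm_real, norm_of_nonneg ha.le]⟩
  have hc : c ≠ 0 := norm_pos_iff.1 ha
  have hc1 : ‖c‖ < 1 := hab.trans hb
  have hy := isWeightedTorsionFn_torsionPullback hγ1.ne hinj hf hc hc1 hua
  refine ⟨_, exists_eq_mul_add_of_eqOn_deriv isOpen_ball (convex_ball _ _).isPreconnected hf
    (eqOn_const_of_forall_norm_eq_dilationNormSq_le (hf.deriv isOpen_ball)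
      (integrableOn_torsionPullback_rpow hγ hγ1.ne hinj hf hc hc1 hua)
      (fun z hz ↦ rpow_pos_of_pos (hy.pos z hz) _) hc hab hb ?_)⟩
  rintro ζ rfl
  have hbound := dilationNormSq_torsionPullback_le hγ hγ1 hinj hf hc hc1
    (norm_pos_iff.1 (ha.trans hab)) hb hua hub
  rw [dilationNormSq_torsionPullback_self hγ hγ1.ne hinj hf hc hc1 hua]
  have h1 : (1 - γ) / 2 * normalizedRigidity γ f u ‖ζ‖ ≤
      (1 - γ) / 2 * normalizedRigidity γ f u ‖c‖ := by gcongr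
  linarith

theorem torsional_rigidity_schwarz_lemma_general (hγ : -1 ≤ γ) (hγ1 : γ < 1)
    (hinj : InjOn f (ball 0 1)) (hf : DifferentiableOn ℂ f (ball 0 1))
    (hu : ∀ r ∈ Ioo (0 : ℝ) 1, IsTorsionFnC γ (f '' ball 0 r) (u r)) :
    MonotoneOn (normalizedRigidity γ f u) (Ioo 0 1) ∧
      ((¬∃ p q : ℂ, ∀ z ∈ ball (0 : ℂ) 1, f z = p * z + q) →
        StrictMonoOn (normalizedRigidity γ f u) (Ioo 0 1)) := by
  refine ⟨monotoneOn_iff_forall_lt.2 fun a ha b hb hab ↦ ?_, fun hnot a ha b hb hab ↦ ?_⟩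
  · exact normalizedRigidity_le hγ hγ1 hinj hf ha.1 hab hb.2 (hu a ha) (hu b hb)
  · exact lt_of_not_ge fun hle ↦ hnot <| exists_eq_mul_add_of_normalizedRigidity_le hγ hγ1 hinj hf
      ha.1 hab hb.2 (hu a ha) (hu b hb) hle

end Rigidity

end

/-- The forward Schwarz-type lemma for the `γ`-torsional rigidity:
`r ↦ T_γ(f(B(0,r))) / r^{4/(1-γ)}` is monotone increasing on `(0,1)`, strictly
unless `f` is linear. -/
theorem torsional_rigidity_schwarz_lemma
    (γ : ℝ) (hγ0 : 0 ≤ γ) (hγ1 : γ < 1)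
    (f : ℂ → ℂ) (hinj : Set.InjOn f (Metric.ball (0 : ℂ) 1))
    (hf : DifferentiableOn ℂ f (Metric.ball (0 : ℂ) 1))
    (u : ℝ → ℂ → ℝ)
    (htor : ∀ r ∈ Set.Ioo (0 : ℝ) 1, IsTorsionFnC γ (f '' Metric.ball (0 : ℂ) r) (u r))
    (hreg : ContDiffOn ℝ 1 (fun p : ℝ × ℂ => u p.1 (f p.2))
      {p : ℝ × ℂ | 0 < p.1 ∧ p.1 < 1 ∧ ‖p.2‖ < p.1}) :
    MonotoneOn
      (fun r : ℝ => r ^ (-(4 / (1 - γ))) *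
        ∫ z in f '' Metric.ball (0 : ℂ) r, ‖gradient (u r) z‖ ^ 2) (Set.Ioo 0 1) ∧
    ((¬ ∃ a b : ℂ, ∀ z ∈ Metric.ball (0 : ℂ) 1, f z = a * z + b) →
      StrictMonoOn
        (fun r : ℝ => r ^ (-(4 / (1 - γ))) *
          ∫ z in f '' Metric.ball (0 : ℂ) r, ‖gradient (u r) z‖ ^ 2) (Set.Ioo 0 1)) :=
  torsional_rigidity_schwarz_lemma_general (by linarith) hγ1 hinj hf htor
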